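/- (Failure of uniform substitution) For an atom p, the formula p ∨ ¬p is N-valid, but the formula (p ∧ p) ∨ ¬(p ∧ p), obtained from it by uniformly substituting p ∧ p for p, is not N-valid. -/

import Mathlib

/-! ## Dialogical logic: formulas, statements, moves -/

/-- Propositional formulas, built from atoms (indexed by `ℕ`) and `¬`, `∧`, `∨`, `→`. -/
inductive Formula : Type
  | atom : ℕ → Formula
  | neg : Formula → Formula
  | conj : Formula → Formula → Formula
  | disj : Formula → Formula → Formula
  | impl : Formula → Formula → Formula
  deriving DecidableEq, Inhabited

/-- Statements: formulas together with the three symbolic attacks `∧_L`, `∧_R` and `?`. -/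
inductive Statement : Type
  | form : Formula → Statement
  | conjL : Statement  -- the symbolic attack ∧_L
  | conjR : Statement  -- the symbolic attack ∧_R
  | question : Statement   -- the symbolic attack ?
  deriving DecidableEq, Inhabited

/-- A formula is atomic iff it is an atom. -/
def Formula.isAtomic : Formula → Prop
  | .atom _ => True
  | _ => False

/-- A move of a dialogue: a statement together with a reference.  The reference is
`none` for the initial move, `some (m, true)` for an attack on the assertion made at
move `m`, and `some (m, false)` for a defense against the attack made at move `m`. -/
structure Move : Type where
  stmt : Statement
  ref : Option (ℕ × Bool)
  deriving DecidableEq, Inhabited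

/-! ## Particle rules -/

/-- Particle rules, attacks: `Attacks a φ` holds when the statement `a` is an
admissible attack against the assertion `φ`. -/
inductive Attacks : Statement → Formula → Prop
  | conjL (φ ψ : Formula) : Attacks .conjL (.conj φ ψ)
  | conjR (φ ψ : Formula) : Attacks .conjR (.conj φ ψ)
  | disj (φ ψ : Formula) : Attacks .question (.disj φ ψ)
  | impl (φ ψ : Formula) : Attacks (.form φ) (.impl φ ψ)
  | neg (φ : Formula) : Attacks (.form φ) (.neg φ)

/-- Particle rules, defenses: `Defends s a φ` holds when the statement `s` is an
admissible defense of the assertion `φ` against the attack `a`.  (A negation admits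
no defense.) -/
inductive Defends : Statement → Statement → Formula → Prop
  | conjL (φ ψ : Formula) : Defends (.form φ) .conjL (.conj φ ψ)
  | conjR (φ ψ : Formula) : Defends (.form ψ) .conjR (.conj φ ψ)
  | disjL (φ ψ : Formula) : Defends (.form φ) .question (.disj φ ψ)
  | disjR (φ ψ : Formula) : Defends (.form ψ) .question (.disj φ ψ)
  | impl (φ ψ : Formula) : Defends (.form ψ) (.form φ) (.impl φ ψ)

/-! ## Dialogues

A (finite stage of a) dialogue is modelled as a list of moves; the move at index `i`
is the `i`-th move, made by Proponent P if `i` is even and by Opponent O if `i` is odd. -/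

/-- The skeletal dialogue conditions: move 0 is an assertion of a formula with no
reference, and every later move is an attack on, or a defense against, a specified
earlier move of the other player, in accordance with the particle rules; only
non-atomic assertions may be attacked. -/
def IsDialogue (d : List Move) : Prop :=
  (∀ _ : 0 < d.length, d[0]!.ref = none ∧ ∃ φ : Formula, d[0]!.stmt = .form φ) ∧
  (∀ i : ℕ, 0 < i → i < d.length →
    ∃ (m : ℕ) (z : Bool), d[i]!.ref = some (m, z) ∧ m < i ∧ m % 2 ≠ i % 2 ∧
      (z = true →
        ∃ φ : Formula, d[m]!.stmt = .form φ ∧ ¬ φ.isAtomic ∧ Attacks d[i]!.stmt φ) ∧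
      (z = false →
        ∃ (k : ℕ) (φ : Formula), d[m]!.ref = some (k, true) ∧ k < m ∧
          d[k]!.stmt = .form φ ∧ Defends d[i]!.stmt d[m]!.stmt φ))

/-- Rule D10: P may assert an atomic formula only if O has asserted it earlier. -/
def RuleD10 (d : List Move) : Prop :=
  ∀ i < d.length, i % 2 = 0 → ∀ a : ℕ, d[i]!.stmt = .form (.atom a) →
    ∃ j < i, j % 2 = 1 ∧ d[j]!.stmt = .form (.atom a)

/-- Rule D13: each P-assertion may be attacked at most once. -/
def RuleD13 (d : List Move) : Prop :=
  ∀ m : ℕ, m % 2 = 0 → ∀ i < d.length, ∀ j < d.length,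
    d[i]!.ref = some (m, true) → d[j]!.ref = some (m, true) → i = j

/-- Rule E: O may only react (attack or defend) against the immediately preceding
P-move. -/
def RuleE (d : List Move) : Prop :=
  ∀ i < d.length, i % 2 = 1 → ∃ z : Bool, d[i]!.ref = some (i - 1, z)

/-- The rule set N = {D10, D13}. -/
def NRules (d : List Move) : Prop := RuleD10 d ∧ RuleD13 d

/-- The rule set CL = {D10, D13, E}. -/
def CLRules (d : List Move) : Prop := RuleD10 d ∧ RuleD13 d ∧ RuleE d

/-- A dialogue commences with `φ` when its initial move is P's assertion of `φ`. -/
def CommencesWith (φ : Formula) (d : List Move) : Prop :=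
  0 < d.length ∧ d[0]!.stmt = .form φ

/-- An `S`-dialogue for `φ` (for a rule set `S`): a dialogue commencing with `φ`
that obeys the structural rules `S`.  These are exactly the branches (identified
with their underlying move sequences) of the `S`-dialogue tree for `φ`. -/
def SDialogueFor (S : List Move → Prop) (φ : Formula) (d : List Move) : Prop :=
  IsDialogue d ∧ S d ∧ CommencesWith φ d

/-- P wins a finite `S`-dialogue for `φ`: it ends with a P-move (the last index,
`d.length - 1`, is even, i.e. `d.length` is odd) and it cannot be extended by any
legal further (O-)move. -/
def WinsFor (S : List Move → Prop) (φ : Formula) (d : List Move) : Prop :=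
  SDialogueFor S φ d ∧ d.length % 2 = 1 ∧ ∀ m : Move, ¬ SDialogueFor S φ (d ++ [m])

/-- An `S`-winning strategy for P for `φ`, modelled as a set `T` of `S`-dialogues for
`φ`: the nodes of a rooted subtree of the `S`-dialogue tree for `φ`, each node being
identified with the dialogue leading from the root to it.  The conditions state that
`T` is a nonempty, prefix-closed set of `S`-dialogues for `φ` (hence a rooted subtree
of the `S`-dialogue tree with the same root), that every branch of `T` is a finite
`S`-dialogue won by P (leaves are wins for P, and there is no infinite branch), that
every node at odd depth (an O-move) has exactly one child, and that every node at
even depth (a P-move) has the same children in `T` as in the full dialogue tree. -/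
structure IsWinningStrategy (S : List Move → Prop) (φ : Formula) (T : Set (List Move)) : Prop where
  nonempty : T.Nonempty
  dialogues : ∀ d ∈ T, SDialogueFor S φ d
  prefix_closed : ∀ d ∈ T, ∀ e : List Move, e <+: d → 0 < e.length → e ∈ T
  leaf_wins : ∀ d ∈ T, (∀ m : Move, d ++ [m] ∉ T) → WinsFor S φ d
  no_infinite_branch : ∀ f : ℕ → Move, ∃ n : ℕ, 0 < n ∧ (List.ofFn fun i : Fin n => f i) ∉ T
  odd_unique_child : ∀ d ∈ T, 0 < d.length → d.length % 2 = 0 → ∃! m : Move, d ++ [m] ∈ T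
  even_all_children : ∀ d ∈ T, d.length % 2 = 1 →
    ∀ m : Move, SDialogueFor S φ (d ++ [m]) → d ++ [m] ∈ T

/-- `φ` is `S`-valid iff P has an `S`-winning strategy for `φ`. -/
def SValid (S : List Move → Prop) (φ : Formula) : Prop :=
  ∃ T : Set (List Move), IsWinningStrategy S φ T

/-- `φ` is N-valid (`⊨_N φ`) iff P has an N-winning strategy for `φ`. -/
def NValid (φ : Formula) : Prop := SValid NRules φ

lemma get_left (d : List Move) (m : Move) {i : ℕ} (h : i < d.length) :
    (d ++ [m])[i]! = d[i]! := by
  rw [getElem!_pos d i h, getElem!_pos (d ++ [m]) i (by simp; omega),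
    List.getElem_append_left h]

lemma get_last (d : List Move) (m : Move) : (d ++ [m])[d.length]! = m := by
  rw [getElem!_pos (d ++ [m]) d.length (by simp)]
  simp

/-- Legality of `m` as a next move. -/
def StepOK (d : List Move) (m : Move) : Prop :=
  ∃ (n : ℕ) (z : Bool), m.ref = some (n, z) ∧ n < d.length ∧ n % 2 ≠ d.length % 2 ∧
      (z = true →
        ∃ φ : Formula, d[n]!.stmt = .form φ ∧ ¬ φ.isAtomic ∧ Attacks m.stmt φ) ∧
      (z = false →
        ∃ (k : ℕ) (φ : Formula), d[n]!.ref = some (k, true) ∧ k < n ∧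
          d[k]!.stmt = .form φ ∧ Defends m.stmt d[n]!.stmt φ)

lemma step_of {φ : Formula} {d : List Move} {m : Move} (hd : 0 < d.length)
    (h : SDialogueFor NRules φ (d ++ [m])) : StepOK d m := by
  obtain ⟨n, z, h1, h2, h3, h4, h5⟩ := h.1.2 d.length hd (by simp)
  rw [get_last] at h1 h4 h5
  rw [get_left _ _ h2] at h4 h5
  refine ⟨n, z, h1, h2, h3, h4, fun hz => ?_⟩
  obtain ⟨k, ψ, a, b, c, e⟩ := h5 hz
  rw [get_left _ _ (by omega)] at c
  exact ⟨k, ψ, a, b, c, e⟩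

lemma extend {φ : Formula} {d : List Move} {m : Move} (h : SDialogueFor NRules φ d)
    (hs : StepOK d m)
    (h10 : d.length % 2 = 0 → ∀ a : ℕ, m.stmt = .form (.atom a) →
      ∃ j < d.length, j % 2 = 1 ∧ d[j]!.stmt = .form (.atom a))
    (h13 : ∀ n, n % 2 = 0 → m.ref = some (n, true) →
      ∀ i < d.length, d[i]!.ref ≠ some (n, true)) :
    SDialogueFor NRules φ (d ++ [m]) := by
  obtain ⟨⟨hA, hB⟩, ⟨hC, hD⟩, hE, hF⟩ := h
  have len : (d ++ [m]).length = d.length + 1 := by simp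
  refine ⟨⟨fun _ => ?_, fun i hi hl => ?_⟩, ⟨?_, ?_⟩, ?_, ?_⟩
  · rw [get_left _ _ hE]; exact hA hE
  · rw [len] at hl
    rcases (by omega : i < d.length ∨ i = d.length) with h | rfl
    · obtain ⟨n, z, h1, h2, h3, h4, h5⟩ := hB i hi h
      refine ⟨n, z, ?_, h2, h3, ?_, ?_⟩
      · rwa [get_left _ _ h]
      · rwa [get_left _ _ h, get_left _ _ (by omega)]
      · intro hz
        obtain ⟨k, ψ, a, b, c, e⟩ := h5 hz
        refine ⟨k, ψ, ?_, b, ?_, ?_⟩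
        · rwa [get_left _ _ (by omega)]
        · rwa [get_left _ _ (by omega)]
        · rwa [get_left _ _ h, get_left _ _ (by omega)]
    · obtain ⟨n, z, h1, h2, h3, h4, h5⟩ := hs
      refine ⟨n, z, ?_, h2, h3, ?_, ?_⟩
      · rwa [get_last]
      · rwa [get_last, get_left _ _ h2]
      · intro hz
        obtain ⟨k, ψ, a, b, c, e⟩ := h5 hz
        refine ⟨k, ψ, ?_, b, ?_, ?_⟩
        · rwa [get_left _ _ h2]
        · rwa [get_left _ _ (by omega)]
        · rwa [get_last, get_left _ _ h2]
  · intro i hl he a ha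
    rw [len] at hl
    rcases (by omega : i < d.length ∨ i = d.length) with h | rfl
    · rw [get_left _ _ h] at ha
      obtain ⟨j, h1, h2, h3⟩ := hC i h he a ha
      exact ⟨j, h1, h2, by rwa [get_left _ _ (by omega)]⟩
    · rw [get_last] at ha
      obtain ⟨j, h1, h2, h3⟩ := h10 he a ha
      exact ⟨j, h1, h2, by rwa [get_left _ _ (by omega)]⟩
  · intro n hn i hi j hj h1 h2
    rw [len] at hi hj
    rcases (by omega : i < d.length ∨ i = d.length) with h | rfl <;>
    rcases (by omega : j < d.length ∨ j = d.length) with h' | rfl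
    · rw [get_left _ _ h] at h1
      rw [get_left _ _ h'] at h2
      exact hD n hn i h j h' h1 h2
    · rw [get_left _ _ h] at h1
      rw [get_last] at h2
      exact absurd h1 (h13 n hn h2 i h)
    · rw [get_left _ _ h'] at h2
      rw [get_last] at h1
      exact absurd h2 (h13 n hn h1 j h')
    · rfl
  · omega
  · rwa [get_left _ _ hE]

/-- A set of nonempty lists closed under prefixes where every node has a child has an
infinite branch. -/
lemma infinite_branch {T : Set (List Move)} (hne : T.Nonempty)
    (hp : ∀ d ∈ T, ∀ e : List Move, e <+: d → 0 < e.length → e ∈ T)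
    (hc : ∀ d ∈ T, ∃ m : Move, d ++ [m] ∈ T) :
    ∃ f : ℕ → Move, ∀ n : ℕ, 0 < n → (List.ofFn fun i : Fin n => f i) ∈ T := by
  obtain ⟨d0, h0⟩ := hne
  choose! g hg using hc
  let s : ℕ → List Move := fun n => Nat.rec d0 (fun _ d => d ++ [g d]) n
  have hs : ∀ n, s (n + 1) = s n ++ [g (s n)] := fun n => rfl
  have hT : ∀ n, s n ∈ T := by
    intro n
    induction n with
    | zero => exact h0
    | succ n ih => rw [hs]; exact hg _ ih
  have hl : ∀ n, n ≤ (s n).length := by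
    intro n
    induction n with
    | zero => simp
    | succ n ih => rw [hs]; simp; omega
  have hst : ∀ i n, i + 1 ≤ n → (s n)[i]! = (s (i + 1))[i]! := by
    intro i n h
    induction n, h using Nat.le_induction with
    | base => rfl
    | succ n hn ih => rw [hs n, get_left _ _ (by have := hl n; omega), ih]
  refine ⟨fun i => (s (i + 1))[i]!, fun n hn => ?_⟩
  refine hp _ (hT n) _ ?_ (by simpa using hn)
  have : (List.ofFn fun i : Fin n => (s ((i : ℕ) + 1))[(i : ℕ)]!) = (s n).take n := by
    apply List.ext_getElem
    · simp [hl n]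
    · intro i h1 h2
      simp only [List.length_ofFn] at h1
      have h3 := hl n
      simp only [List.getElem_ofFn, List.getElem_take]
      rw [← hst i n h1, getElem!_pos _ _ (by omega)]
  rw [this]
  exact List.take_prefix _ _

/-- The formulas that can occur in a dialogue for `(p ∧ p) ∨ ¬(p ∧ p)`. -/
def Good (p : ℕ) (f : Formula) : Prop :=
  f = .atom p ∨ f = .conj (.atom p) (.atom p) ∨ f = .neg (.conj (.atom p) (.atom p)) ∨
    f = .disj (.conj (.atom p) (.atom p)) (.neg (.conj (.atom p) (.atom p)))

lemma Good.attack {p : ℕ} {f g : Formula} (h : Good p f) (ha : Attacks (.form g) f) :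
    f = .neg (.conj (.atom p) (.atom p)) ∧ g = .conj (.atom p) (.atom p) := by
  rcases h with rfl | rfl | rfl | rfl <;> cases ha
  exact ⟨rfl, rfl⟩

lemma Good.defend {p : ℕ} {f g : Formula} {a : Statement} (h : Good p f)
    (ha : Defends (.form g) a f) : Good p g := by
  rcases h with rfl | rfl | rfl | rfl <;> cases ha <;> simp [Good]

lemma all_good {p : ℕ} {d : List Move}
    (h : SDialogueFor NRules (.disj (.conj (.atom p) (.atom p))
      (.neg (.conj (.atom p) (.atom p)))) d) :
    ∀ i < d.length, ∀ f, d[i]!.stmt = .form f → Good p f := by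
  intro i
  induction i using Nat.strong_induction_on with
  | _ i ih =>
    intro hi f hf
    rcases Nat.eq_zero_or_pos i with rfl | hpos
    · have := h.2.2.2
      rw [hf] at this
      injection this with this
      subst this
      simp [Good]
    · obtain ⟨n, z, h1, h2, h3, h4, h5⟩ := h.1.2 i hpos hi
      cases z
      · obtain ⟨k, ψ, a, b, c, e⟩ := h5 rfl
        rw [hf] at e
        exact (ih k (by omega) (by omega) ψ c).defend e
      · obtain ⟨ψ, a, b, c⟩ := h4 rfl
        rw [hf] at c
        have := ((ih n h2 (by omega) ψ a).attack c).2
        subst this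
        simp [Good]

lemma exists_attack (f : Formula) (h : ¬ f.isAtomic) : ∃ a, Attacks a f := by
  cases f with
  | atom _ => exact absurd trivial h
  | neg φ => exact ⟨_, .neg φ⟩
  | conj φ ψ => exact ⟨_, .conjL φ ψ⟩
  | disj φ ψ => exact ⟨_, .disj φ ψ⟩
  | impl φ ψ => exact ⟨_, .impl φ ψ⟩

lemma exists_defense {a : Statement} (f : Formula) (ha : ∀ g, a ≠ .form g)
    (h : Attacks a f) : ∃ s, Defends s a f := by
  cases h with
  | conjL φ ψ => exact ⟨_, .conjL φ ψ⟩
  | conjR φ ψ => exact ⟨_, .conjR φ ψ⟩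
  | disj φ ψ => exact ⟨_, .disjL φ ψ⟩
  | impl φ ψ => exact absurd rfl (ha _)
  | neg φ => exact absurd rfl (ha _)

lemma O_can_move {p : ℕ} {d : List Move}
    (h : SDialogueFor NRules (.disj (.conj (.atom p) (.atom p))
      (.neg (.conj (.atom p) (.atom p)))) d) (hodd : d.length % 2 = 1) :
    ∃ m, SDialogueFor NRules (.disj (.conj (.atom p) (.atom p))
      (.neg (.conj (.atom p) (.atom p)))) (d ++ [m]) := by
  obtain ⟨i, hi⟩ : ∃ i, d.length = i + 1 := ⟨d.length - 1, by omega⟩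
  by_cases hform : ∃ f, d[i]!.stmt = .form f
  · obtain ⟨f, hf⟩ := hform
    by_cases hat : f.isAtomic
    · obtain ⟨a, rfl⟩ : ∃ a, f = .atom a := by
        cases f <;> simp_all [Formula.isAtomic]
      obtain ⟨j, hj, hj2, hj3⟩ := h.2.1.1 i (by omega) (by omega) a hf
      obtain ⟨n, z, h1, h2, h3, h4, h5⟩ := h.1.2 j (by omega) (by omega)
      cases z
      · refine ⟨d[j]!, extend h ⟨n, false, h1, by omega, by omega, by simp, h5⟩
          (by omega) ?_⟩
        intro n' _ hh
        rw [h1] at hh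
        simp at hh
      · obtain ⟨ψ, a1, b, c⟩ := h4 rfl
        rw [hj3] at c
        have := ((all_good h n (by omega) ψ a1).attack c).2
        cases this
    · obtain ⟨a, ha⟩ := exists_attack f hat
      refine ⟨⟨a, some (i, true)⟩, extend h ⟨i, true, rfl, by omega, by omega,
        fun _ => ⟨f, hf, hat, ha⟩, by simp⟩ (by omega) ?_⟩
      intro n hn hh k hk hk2
      simp only [Option.some.injEq, Prod.mk.injEq, and_true] at hh
      subst hh
      rcases Nat.eq_zero_or_pos k with rfl | hpos
      · rw [(h.1.1 (by omega)).1] at hk2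
        cases hk2
      · obtain ⟨n, z, h1, h2, _⟩ := h.1.2 k hpos hk
        rw [hk2] at h1
        simp only [Option.some.injEq, Prod.mk.injEq] at h1
        omega
  · push Not at hform
    have hpos : 0 < i := by
      rcases Nat.eq_zero_or_pos i with rfl | hpos
      · obtain ⟨f, hf⟩ := (h.1.1 (by omega)).2
        exact absurd hf (hform f)
      · exact hpos
    obtain ⟨n, z, h1, h2, h3, h4, h5⟩ := h.1.2 i hpos (by omega)
    cases z
    · obtain ⟨k, ψ, a, b, c, e⟩ := h5 rfl
      exfalso
      generalize d[i]!.stmt = s at e hform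
      generalize d[n]!.stmt = t at e
      cases e <;> exact hform _ rfl
    · obtain ⟨ψ, a, b, c⟩ := h4 rfl
      obtain ⟨s, hs⟩ := exists_defense ψ hform c
      exact ⟨⟨s, some (i, false)⟩, extend h ⟨i, false, rfl, by omega, by omega, by simp,
        fun _ => ⟨n, ψ, h1, h2, a, hs⟩⟩ (by omega) (by simp)⟩

lemma not_valid (p : ℕ) : ¬ NValid (Formula.disj (Formula.conj (Formula.atom p) (Formula.atom p))
        (Formula.neg (Formula.conj (Formula.atom p) (Formula.atom p)))) := by
  rintro ⟨T, hT⟩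
  obtain ⟨f, hf⟩ := infinite_branch hT.nonempty hT.prefix_closed (by
    intro d hd
    have h := hT.dialogues d hd
    rcases Nat.mod_two_eq_zero_or_one d.length with h2 | h2
    · exact (hT.odd_unique_child d hd h.2.2.1 h2).exists
    · obtain ⟨m, hm⟩ := O_can_move h h2
      exact ⟨m, hT.even_all_children d hd h2 m hm⟩)
  obtain ⟨n, hn, hn2⟩ := hT.no_infinite_branch f
  exact hn2 (hf n hn)

section EM
variable (p : ℕ)

abbrev emF : Formula := .disj (.atom p) (.neg (.atom p))
abbrev mv0 : Move := ⟨.form (emF p), none⟩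
abbrev mv1 : Move := ⟨.question, some (0, true)⟩
abbrev mv2 : Move := ⟨.form (.neg (.atom p)), some (1, false)⟩
abbrev mv3 : Move := ⟨.form (.atom p), some (2, true)⟩
abbrev mv4 : Move := ⟨.form (.atom p), some (1, false)⟩

lemma em1 : SDialogueFor NRules (emF p) [mv0 p] := by
  refine ⟨⟨fun _ => ⟨rfl, _, rfl⟩, fun i hi hl => ?_⟩, ⟨?_, ?_⟩, by simp, rfl⟩
  · simp at hl; omega
  · intro i hi _ a ha
    simp at hi
    subst hi
    simp at ha
  · intro m _ i hi j hj _ _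
    simp at hi hj
    omega

lemma em2 : SDialogueFor NRules (emF p) [mv0 p, mv1] := by
  refine extend (m := mv1) (em1 p) ⟨0, true, rfl, by simp, by simp,
    fun _ => ⟨_, rfl, id, .disj _ _⟩, by simp⟩ (by simp) ?_
  intro n hn hh i hi
  simp at hi
  subst hi
  simp

lemma em3 : SDialogueFor NRules (emF p) [mv0 p, mv1, mv2 p] :=
  extend (m := mv2 p) (em2 p) ⟨1, false, rfl, by simp, by simp, by simp,
    fun _ => ⟨0, _, rfl, by simp, rfl, .disjR _ _⟩⟩ (by simp) (by simp)

lemma em4 : SDialogueFor NRules (emF p) [mv0 p, mv1, mv2 p, mv3 p] := by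
  refine extend (m := mv3 p) (em3 p) ⟨2, true, rfl, by simp, by simp,
    fun _ => ⟨_, rfl, id, .neg _⟩, by simp⟩ (by simp) ?_
  intro n hn hh i hi
  simp at hi hh
  subst hh
  interval_cases i <;> simp

lemma em5 : SDialogueFor NRules (emF p) [mv0 p, mv1, mv2 p, mv3 p, mv4 p] := by
  refine extend (m := mv4 p) (em4 p) ⟨1, false, rfl, by simp, by simp, by simp,
    fun _ => ⟨0, _, rfl, by simp, rfl, .disjL _ _⟩⟩ ?_ (by simp)
  intro _ a ha
  exact ⟨3, by simp, rfl, ha⟩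

lemma em1_next (m : Move) (h : SDialogueFor NRules (emF p) ([mv0 p] ++ [m])) : m = mv1 := by
  obtain ⟨n, z, h1, h2, h3, h4, h5⟩ := step_of (by simp) h
  obtain ⟨s, r⟩ := m
  simp at h1 h2
  subst h1 h2
  cases z
  · simp at h5
  · simp at h4
    cases h4.2
    rfl

lemma no_second {φ : Formula} {d : List Move} {m : Move} {n i : ℕ}
    (h : SDialogueFor NRules φ (d ++ [m])) (hn : n % 2 = 0) (hi : i < d.length)
    (h1 : d[i]!.ref = some (n, true)) : m.ref ≠ some (n, true) := by
  intro hm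
  have := h.2.1.2 n hn i (by simp; omega) d.length (by simp)
    (by rwa [get_left _ _ hi]) (by rwa [get_last])
  omega

lemma em3_next (m : Move) (h : SDialogueFor NRules (emF p) ([mv0 p, mv1, mv2 p] ++ [m])) :
    m = mv3 p := by
  have hA := no_second (n := 0) (i := 1) h rfl (by simp) rfl
  obtain ⟨n, z, h1, h2, h3, h4, h5⟩ := step_of (by simp) h
  obtain ⟨s, r⟩ := m
  simp at h1 h2 h3
  subst h1
  interval_cases n
  · cases z
    · simp at h5
    · simp at hA
  · simp at h3
  · cases z
    · simp at h5
    · simp at h4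
      cases h4.2
      rfl

lemma em5_next (m : Move)
    (h : SDialogueFor NRules (emF p) ([mv0 p, mv1, mv2 p, mv3 p, mv4 p] ++ [m])) : False := by
  have hA := no_second (n := 0) (i := 1) h rfl (by simp) rfl
  have hB := no_second (n := 2) (i := 3) h rfl (by simp) rfl
  obtain ⟨n, z, h1, h2, h3, h4, h5⟩ := step_of (by simp) h
  obtain ⟨s, r⟩ := m
  simp at h1 h2 h3
  subst h1
  interval_cases n
  · cases z
    · simp at h5
    · simp at hA
  · simp at h3
  · cases z
    · simp at h5
    · simp at hB
  · simp at h3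
  · cases z
    · simp at h5
    · simp [Formula.isAtomic] at h4

lemma em_valid : NValid (emF p) := by
  refine ⟨{[mv0 p], [mv0 p, mv1], [mv0 p, mv1, mv2 p], [mv0 p, mv1, mv2 p, mv3 p],
    [mv0 p, mv1, mv2 p, mv3 p, mv4 p]}, ?_⟩
  refine ⟨⟨[mv0 p], by simp⟩, ?_, ?_, ?_, ?_, ?_, ?_⟩
  · rintro d (rfl | rfl | rfl | rfl | rfl)
    exacts [em1 p, em2 p, em3 p, em4 p, em5 p]
  · rintro d (rfl | rfl | rfl | rfl | rfl) e he hl <;>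
    · rw [List.prefix_iff_eq_take] at he
      have : e.length ≤ 5 := by
        rw [he]; simp
      generalize e.length = k at *
      subst he
      interval_cases k <;> simp
  · rintro d (rfl | rfl | rfl | rfl | rfl) hm
    · exact absurd (by simp) (hm mv1)
    · exact absurd (by simp) (hm (mv2 p))
    · exact absurd (by simp) (hm (mv3 p))
    · exact absurd (by simp) (hm (mv4 p))
    · exact ⟨em5 p, by simp, fun m h => em5_next p m h⟩
  · intro f
    refine ⟨6, by simp, ?_⟩
    intro h
    rcases h with h | h | h | h | h <;> simpa using congrArg List.length h
  · rintro d (rfl | rfl | rfl | rfl | rfl) _ hl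
    · simp at hl
    · exact ⟨mv2 p, by simp, fun y hy => by simpa using hy⟩
    · simp at hl
    · exact ⟨mv4 p, by simp, fun y hy => by simpa using hy⟩
    · simp at hl
  · rintro d (rfl | rfl | rfl | rfl | rfl) hl m hm
    · rw [em1_next p m hm]; simp
    · simp at hl
    · rw [em3_next p m hm]; simp
    · simp at hl
    · exact (em5_next p m hm).elim

end EM

/-- **Failure of uniform substitution.** For an atom `p`, the formula
`p ∨ ¬p` is N-valid, but `(p ∧ p) ∨ ¬(p ∧ p)`, obtained from it by uniformly
substituting `p ∧ p` for `p`, is not N-valid. -/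
theorem failure_of_uniform_substitution (p : ℕ) :
    NValid (Formula.disj (Formula.atom p) (Formula.neg (Formula.atom p))) ∧
    ¬ NValid (Formula.disj (Formula.conj (Formula.atom p) (Formula.atom p))
        (Formula.neg (Formula.conj (Formula.atom p) (Formula.atom p)))) := by
  exact ⟨em_valid p, not_valid p⟩
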